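/- arXiv:2202.12942 — 2 statements merged into one kernel-verified Lean document; each statement's English description precedes it below -/
import Mathlib

section
/- Expression of the QP-WPT in the quadratic-phase frequency domain: let f, ψ ∈ L¹(ℝ) ∩ L²(ℝ), α > 0 and ξ, β ∈ ℝ. Then W^μ_f(ξ, β, α) = √α · √(b/(2πi)) ∫_ℝ e^{−i(aβ² + bβw + cw² + dβ + ew)} · e^{i(cα²w² + eαw − 2cwξ)} · Q_μ[t ↦ e^{i(at² + dt)} f(t)](w + ξ) · conj(Q_μ[t ↦ e^{−i(at² + dt)} ψ(t)](αw)) dw. -/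
open MeasureTheory Complex

/-- The constant √(b/(2πi)) = √(b/(2π))·e^{−iπ/4}. -/
noncomputable def qpConst (b : ℝ) : ℂ :=
  (Real.sqrt (b / (2 * Real.pi)) : ℂ) * Complex.exp (-((Real.pi / 4 : ℝ) : ℂ) * Complex.I)

/-- The dilation ψ_α(t) = α^{−1/2} ψ(t/α). -/
noncomputable def dil (ψ : ℝ → ℂ) (α : ℝ) (t : ℝ) : ℂ :=
  ((α ^ (-(1 / 2 : ℝ)) : ℝ) : ℂ) * ψ (t / α)

/-- The quadratic-phase Fourier transform. -/
noncomputable def QPFT (a b c d e : ℝ) (f : ℝ → ℂ) (ξ : ℝ) : ℂ :=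
  qpConst b * ∫ t : ℝ, f t *
    Complex.exp (Complex.I * ((a * t ^ 2 + b * t * ξ + c * ξ ^ 2 + d * t + e * ξ : ℝ) : ℂ))

/-- The quadratic-phase wave packet transform of `f` with respect to the wavelet `ψ`. -/
noncomputable def QPWPT (a b c d e : ℝ) (ψ f : ℝ → ℂ) (ξ β α : ℝ) : ℂ :=
  qpConst b * ∫ t : ℝ,
    Complex.exp (Complex.I * ((2 * a * t ^ 2 + b * t * ξ + c * ξ ^ 2 + 2 * d * t + e * ξ
      - a * β ^ 2 - d * β : ℝ) : ℂ)) * f t * (starRingEnd ℂ) (dil ψ α (t - β))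

/-- The analyzing packet ψ^μ_{ξ,β,α}. -/
noncomputable def qpwPacket (a b c d e : ℝ) (ψ : ℝ → ℂ) (ξ β α : ℝ) (t : ℝ) : ℂ :=
  (starRingEnd ℂ) (qpConst b) *
    Complex.exp (-Complex.I * ((2 * a * t ^ 2 + b * t * ξ + c * ξ ^ 2 + 2 * d * t + e * ξ
      - a * β ^ 2 - d * β : ℝ) : ℂ)) * dil ψ α (t - β)

open FourierTransform SchwartzMap in
theorem qp_fourier_ae (g : ℝ → ℂ) (h1 : Integrable g volume) (h2 : MemLp g 2 volume) :
    ((𝓕 (h2.toLp g) : Lp ℂ 2 (volume : Measure ℝ)) : ℝ → ℂ) =ᵐ[volume] 𝓕 g := by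
  have hc : Continuous (𝓕 g) := by
    exact VectorFourier.fourierIntegral_continuous Real.continuous_fourierChar
      (by exact continuous_inner) h1
  apply ae_eq_of_integral_contDiff_smul_eq
  · exact (Lp.memLp _).locallyIntegrable (by norm_num)
  · exact hc.locallyIntegrable
  intro φ hφ hs
  have hg₁ : HasCompactSupport (Complex.ofRealCLM ∘ φ) := hs.comp_left rfl
  have hg₂ : ContDiff ℝ ((⊤ : ℕ∞) : WithTop ℕ∞) (Complex.ofRealCLM ∘ φ) :=
    Complex.ofRealCLM.contDiff.comp hφ
  let Φ : 𝓢(ℝ, ℂ) := hg₁.toSchwartzMap hg₂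
  have key := congrArg (fun T : 𝓢'(ℝ, ℂ) => T Φ) (Lp.fourier_toTemperedDistribution_eq (h2.toLp g))
  simp only [TemperedDistribution.fourier_apply, Lp.toTemperedDistribution_apply] at key
  have e1 : ∫ x, (𝓕 Φ) x • (h2.toLp g) x = ∫ x, (𝓕 Φ) x • g x := by
    apply integral_congr_ae
    filter_upwards [h2.coeFn_toLp] with x hx
    rw [hx]
  have e2 : ∫ x, (𝓕 Φ) x • g x = ∫ x, Φ x • 𝓕 g x := by
    have := VectorFourier.integral_fourierIntegral_smul_eq_flip (μ := volume) (ν := volume) (L := innerₗ ℝ) (f := Φ) (g := g) Real.continuous_fourierChar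
      (by exact continuous_inner) Φ.integrable h1
    rw [flip_innerₗ] at this
    exact this
  rw [e1, e2] at key
  have e3 : ∀ x, φ x • 𝓕 g x = Φ x • 𝓕 g x := fun x => by simp [Φ]
  have e4 : ∀ x, φ x • (𝓕 (h2.toLp g) : Lp ℂ 2 (volume : Measure ℝ)) x = Φ x • (𝓕 (h2.toLp g) : Lp ℂ 2 (volume : Measure ℝ)) x :=
    fun x => by simp [Φ]
  simp only [e3, e4]
  exact key.symm

open FourierTransform in
theorem qp_plancherel (g h : ℝ → ℂ) (h1 : Integrable g volume) (h2 : MemLp g 2 volume)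
    (k1 : Integrable h volume) (k2 : MemLp h 2 volume) :
    ∫ w, 𝓕 g w * (starRingEnd ℂ) (𝓕 h w) = ∫ t, g t * (starRingEnd ℂ) (h t) := by
  have key := Lp.inner_fourier_eq (k2.toLp h) (h2.toLp g)
  rw [L2.inner_def, L2.inner_def] at key
  have a1 := qp_fourier_ae g h1 h2
  have a2 := qp_fourier_ae h k1 k2
  calc _ = _ := integral_congr_ae (by
        filter_upwards [a1, a2] with x hx hy
        rw [← hx, ← hy]; exact (RCLike.inner_apply _ _).symm)
    _ = _ := key
    _ = _ := integral_congr_ae (by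
        filter_upwards [h2.coeFn_toLp, k2.coeFn_toLp] with x hx hy
        rw [hx, hy]; exact (RCLike.inner_apply _ _))

/-- Parseval with kernel `e^{ibtw}`. -/
theorem qp_parseval (b : ℝ) (hb : 0 < b) (g h : ℝ → ℂ) (h1 : Integrable g volume)
    (h2 : MemLp g 2 volume) (k1 : Integrable h volume) (k2 : MemLp h 2 volume) :
    ((b / (2 * Real.pi) : ℝ) : ℂ) * ∫ w : ℝ, (∫ t : ℝ, g t * cexp (I * ((b * t * w : ℝ) : ℂ))) *
      (starRingEnd ℂ) (∫ t : ℝ, h t * cexp (I * ((b * t * w : ℝ) : ℂ)))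
    = ∫ t, g t * (starRingEnd ℂ) (h t) := by
  have hF : ∀ (u : ℝ → ℂ) (w : ℝ), ∫ t : ℝ, u t * cexp (I * ((b * t * w : ℝ) : ℂ))
      = FourierTransform.fourier u (-(b / (2 * Real.pi)) * w) := by
    intro u w
    rw [Real.fourier_real_eq_integral_exp_smul]
    congr 1; ext t
    rw [smul_eq_mul, mul_comm]
    congr 2
    push_cast
    have : (Real.pi : ℂ) ≠ 0 := by exact_mod_cast Real.pi_ne_zero
    field_simp
  simp only [hF]
  have := Measure.integral_comp_mul_left (fun w => FourierTransform.fourier g w *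
      (starRingEnd ℂ) (FourierTransform.fourier h w)) (-(b / (2 * Real.pi)))
  rw [this, qp_plancherel g h h1 h2 k1 k2]
  have hp : 0 < b / (2 * Real.pi) := by positivity
  rw [abs_inv, abs_neg, abs_of_pos hp, Complex.real_smul, ← mul_assoc, ← Complex.ofReal_mul,
    mul_inv_cancel₀ hp.ne']
  simp

theorem qp_const_sq (b : ℝ) (hb : 0 < b) :
    qpConst b * (starRingEnd ℂ) (qpConst b) = ((b / (2 * Real.pi) : ℝ) : ℂ) := by
  have hp : 0 ≤ b / (2 * Real.pi) := by positivity
  unfold qpConst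
  rw [map_mul, Complex.conj_ofReal, ← Complex.exp_conj]
  have : ((Real.sqrt (b / (2 * Real.pi)) : ℂ)) * (Real.sqrt (b / (2 * Real.pi)) : ℂ)
      = ((b / (2 * Real.pi) : ℝ) : ℂ) := by
    rw [← Complex.ofReal_mul, Real.mul_self_sqrt hp]
  rw [mul_mul_mul_comm, this, ← Complex.exp_add, map_mul, map_neg, Complex.conj_ofReal,
    Complex.conj_I]
  simp

theorem qp_dil_fourier (b : ℝ) (ψ : ℝ → ℂ) (α : ℝ) (hα : 0 < α) (β w : ℝ) :
    ∫ t : ℝ, dil ψ α (t - β) * cexp (I * ((b * t * w : ℝ) : ℂ))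
      = (Real.sqrt α : ℂ) * (cexp (I * ((b * β * w : ℝ) : ℂ)) *
        ∫ t : ℝ, ψ t * cexp (I * ((b * t * (α * w) : ℝ) : ℂ))) := by
  have s1 := integral_sub_right_eq_self (μ := (volume : Measure ℝ))
    (fun t : ℝ => dil ψ α t * cexp (I * ((b * (t + β) * w : ℝ) : ℂ))) β
  simp only [sub_add_cancel] at s1
  rw [s1]
  have s2 := Measure.integral_comp_div
    (fun t : ℝ => ψ t * cexp (I * ((b * (α * t + β) * w : ℝ) : ℂ))) α
  have s3 : ∀ t : ℝ, α * (t / α) = t := fun t => by field_simp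
  simp only [s3] at s2
  unfold dil
  simp only [mul_assoc (((α ^ (-(1 / 2 : ℝ)) : ℝ) : ℂ))]
  rw [integral_const_mul, s2, abs_of_pos hα, Complex.real_smul, ← mul_assoc, ← Complex.ofReal_mul]
  have s4 : α ^ (-(1 / 2 : ℝ)) * α = Real.sqrt α := by
    rw [Real.sqrt_eq_rpow]
    nth_rewrite 2 [← Real.rpow_one α]
    rw [← Real.rpow_add hα]; norm_num
  rw [s4, ← integral_const_mul (cexp _)]
  congr 2; ext t
  rw [mul_left_comm, ← Complex.exp_add]
  congr 2; push_cast; ring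

theorem qp_dil_mem (ψ : ℝ → ℂ) (hψ1 : Integrable ψ volume) (hψ2 : MemLp ψ 2 volume)
    (α : ℝ) (hα : 0 < α) (β : ℝ) :
    Integrable (fun t => dil ψ α (t - β)) volume ∧ MemLp (fun t => dil ψ α (t - β)) 2 volume := by
  have i1 : Integrable (fun t => dil ψ α (t - β)) volume := by
    have := ((hψ1.comp_div hα.ne').const_mul ((α ^ (-(1 / 2 : ℝ)) : ℝ) : ℂ)).comp_sub_right β
    exact this
  refine ⟨i1, ?_⟩
  rw [memLp_two_iff_integrable_sq_norm i1.aestronglyMeasurable]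
  have h := (memLp_two_iff_integrable_sq_norm hψ1.aestronglyMeasurable).1 hψ2
  have := ((h.comp_div hα.ne').const_mul (‖((α ^ (-(1 / 2 : ℝ)) : ℝ) : ℂ)‖ ^ 2)).comp_sub_right β
  refine this.congr (Filter.Eventually.of_forall fun t => ?_)
  simp only [dil, norm_mul, mul_pow]

theorem qp_chirp_mem (p : ℝ → ℝ) (hp : Continuous p) (f : ℝ → ℂ) (hf1 : Integrable f volume)
    (hf2 : MemLp f 2 volume) :
    Integrable (fun t => cexp (I * (p t : ℂ)) * f t) volume ∧
      MemLp (fun t => cexp (I * (p t : ℂ)) * f t) 2 volume := by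
  have hm : AEStronglyMeasurable (fun t => cexp (I * (p t : ℂ)) * f t) volume :=
    (Continuous.aestronglyMeasurable (by fun_prop)).mul hf1.aestronglyMeasurable
  have hn : ∀ t, ‖f t‖ = ‖cexp (I * (p t : ℂ)) * f t‖ := fun t => by
    rw [norm_mul, mul_comm I, Complex.norm_exp_ofReal_mul_I, one_mul]
  exact ⟨hf1.congr' hm (Filter.Eventually.of_forall hn),
    hf2.congr_norm hm (Filter.Eventually.of_forall hn)⟩

theorem qpwpt_frequency_domain (a b c d e : ℝ) (hb : 0 < b) (f ψ : ℝ → ℂ)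
    (hf1 : Integrable f volume) (hf2 : MemLp f 2 volume)
    (hψ1 : Integrable ψ volume) (hψ2 : MemLp ψ 2 volume)
    (α : ℝ) (hα : 0 < α) (ξ β : ℝ) :
    QPWPT a b c d e ψ f ξ β α
      = (Real.sqrt α : ℂ) * qpConst b * ∫ w : ℝ,
          Complex.exp (-Complex.I * ((a * β ^ 2 + b * β * w + c * w ^ 2 + d * β + e * w : ℝ) : ℂ)) *
          Complex.exp (Complex.I * ((c * α ^ 2 * w ^ 2 + e * α * w - 2 * c * w * ξ : ℝ) : ℂ)) *
          QPFT a b c d e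
            (fun t => Complex.exp (Complex.I * ((a * t ^ 2 + d * t : ℝ) : ℂ)) * f t) (w + ξ) *
          (starRingEnd ℂ) (QPFT a b c d e
            (fun t => Complex.exp (-Complex.I * ((a * t ^ 2 + d * t : ℝ) : ℂ)) * ψ t) (α * w)) := by
  obtain ⟨g1, g2⟩ := qp_chirp_mem (fun t => 2 * a * t ^ 2 + 2 * d * t + b * t * ξ) (by fun_prop)
    f hf1 hf2
  obtain ⟨k1, k2⟩ := qp_dil_mem ψ hψ1 hψ2 α hα β
  have key := qp_parseval b hb _ _ g1 g2 k1 k2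
  simp only [qp_dil_fourier b ψ α hα β] at key
  have hL : QPWPT a b c d e ψ f ξ β α = qpConst b *
      (cexp (I * ((c * ξ ^ 2 + e * ξ - a * β ^ 2 - d * β : ℝ) : ℂ)) *
      ∫ t : ℝ, cexp (I * ((2 * a * t ^ 2 + 2 * d * t + b * t * ξ : ℝ) : ℂ)) * f t *
        (starRingEnd ℂ) (dil ψ α (t - β))) := by
    unfold QPWPT
    rw [← integral_const_mul (cexp _)]
    congr 2; ext t
    rw [← mul_assoc, ← mul_assoc, ← Complex.exp_add]
    congr 3; push_cast; ring
  have hQ1 : ∀ w : ℝ, QPFT a b c d e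
      (fun t => cexp (I * ((a * t ^ 2 + d * t : ℝ) : ℂ)) * f t) (w + ξ) = qpConst b *
      (cexp (I * ((c * (w + ξ) ^ 2 + e * (w + ξ) : ℝ) : ℂ)) *
      ∫ t : ℝ, cexp (I * ((2 * a * t ^ 2 + 2 * d * t + b * t * ξ : ℝ) : ℂ)) * f t *
        cexp (I * ((b * t * w : ℝ) : ℂ))) := by
    intro w
    unfold QPFT
    rw [← integral_const_mul (cexp _)]
    congr 2; ext t
    have hE : cexp (I * ((a * t ^ 2 + d * t : ℝ) : ℂ)) * cexp (I * ((a * t ^ 2 + b * t * (w + ξ) +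
        c * (w + ξ) ^ 2 + d * t + e * (w + ξ) : ℝ) : ℂ)) =
        cexp (I * ((c * (w + ξ) ^ 2 + e * (w + ξ) : ℝ) : ℂ)) *
        cexp (I * ((2 * a * t ^ 2 + 2 * d * t + b * t * ξ : ℝ) : ℂ)) *
        cexp (I * ((b * t * w : ℝ) : ℂ)) := by
      simp only [← Complex.exp_add]
      congr 1; push_cast; ring
    linear_combination f t * hE
  have hQ2 : ∀ w : ℝ, QPFT a b c d e
      (fun t => cexp (-I * ((a * t ^ 2 + d * t : ℝ) : ℂ)) * ψ t) (α * w) = qpConst b *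
      (cexp (I * ((c * (α * w) ^ 2 + e * (α * w) : ℝ) : ℂ)) *
      ∫ t : ℝ, ψ t * cexp (I * ((b * t * (α * w) : ℝ) : ℂ))) := by
    intro w
    unfold QPFT
    rw [← integral_const_mul (cexp _)]
    congr 2; ext t
    have hE : cexp (-I * ((a * t ^ 2 + d * t : ℝ) : ℂ)) * cexp (I * ((a * t ^ 2 + b * t * (α * w) +
        c * (α * w) ^ 2 + d * t + e * (α * w) : ℝ) : ℂ)) =
        cexp (I * ((c * (α * w) ^ 2 + e * (α * w) : ℝ) : ℂ)) *
        cexp (I * ((b * t * (α * w) : ℝ) : ℂ)) := by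
      simp only [← Complex.exp_add]
      congr 1; push_cast; ring
    linear_combination ψ t * hE
  rw [hL, ← key, mul_comm (Real.sqrt α : ℂ), mul_assoc (qpConst b),
    ← integral_const_mul ((b / (2 * Real.pi) : ℝ) : ℂ), ← integral_const_mul (cexp _),
    ← integral_const_mul (Real.sqrt α : ℂ)]
  congr 2; ext w
  rw [hQ1, hQ2, ← qp_const_sq b hb]
  generalize (∫ t : ℝ, ψ t * cexp (I * ((b * t * (α * w) : ℝ) : ℂ))) = Ψ
  generalize (∫ t : ℝ, cexp (I * ((2 * a * t ^ 2 + 2 * d * t + b * t * ξ : ℝ) : ℂ)) * f t *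
        cexp (I * ((b * t * w : ℝ) : ℂ))) = F
  simp only [map_mul, Complex.conj_ofReal, ← Complex.exp_conj, Complex.conj_I]
  have hE : cexp (I * ((c * ξ ^ 2 + e * ξ - a * β ^ 2 - d * β : ℝ) : ℂ)) *
      cexp (-I * ((b * β * w : ℝ) : ℂ)) =
      cexp (-I * ((a * β ^ 2 + b * β * w + c * w ^ 2 + d * β + e * w : ℝ) : ℂ)) *
      cexp (I * ((c * α ^ 2 * w ^ 2 + e * α * w - 2 * c * w * ξ : ℝ) : ℂ)) *
      cexp (I * ((c * (w + ξ) ^ 2 + e * (w + ξ) : ℝ) : ℂ)) *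
      cexp (-I * ((c * (α * w) ^ 2 + e * (α * w) : ℝ) : ℂ)) := by
    simp only [← Complex.exp_add]
    congr 1; push_cast; ring
  linear_combination (qpConst b * (starRingEnd ℂ) (qpConst b) * (Real.sqrt α : ℂ) * F *
    (starRingEnd ℂ) Ψ) * hE
end

section
/- Energy conservation for the QP-WPT: let f ∈ L¹(ℝ) ∩ L²(ℝ), let ψ ∈ L¹(ℝ) ∩ L²(ℝ), and fix α > 0. Then ∫_ℝ ∫_ℝ |W^μ_f(ξ, β, α)|² dξ dβ = ‖ψ‖²_{L²(ℝ)} · ‖f‖²_{L²(ℝ)}. -/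
open MeasureTheory Complex

open scoped FourierTransform SchwartzMap ContDiff

lemma aux_fourier_ae (g : ℝ → ℂ) (h1 : Integrable g volume) (h2 : MemLp g 2 volume) :
    ∀ᵐ x : ℝ, (𝓕 (h2.toLp g) : Lp ℂ 2 (volume : Measure ℝ)) x = (𝓕 g : ℝ → ℂ) x := by
  have hcont : Continuous (𝓕 g : ℝ → ℂ) :=
    VectorFourier.fourierIntegral_continuous Real.continuous_fourierChar
      (L := innerₗ ℝ) continuous_inner h1
  apply ae_eq_of_integral_contDiff_smul_eq
  · exact (Lp.memLp _).locallyIntegrable (by norm_num)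
  · exact hcont.locallyIntegrable
  intro φ φs φc
  have hg₁ : HasCompactSupport (Complex.ofRealCLM ∘ φ) := φc.comp_left rfl
  have hg₂ : ContDiff ℝ ∞ (Complex.ofRealCLM ∘ φ) := by fun_prop
  set Φ : 𝓢(ℝ, ℂ) := hg₁.toSchwartzMap hg₂ with hΦ
  have hΦx : ∀ x, Φ x = (φ x : ℂ) := fun x => rfl
  have e1 := congrArg (fun T => T Φ) (Lp.fourier_toTemperedDistribution_eq (h2.toLp g))
  simp only [TemperedDistribution.fourier_apply, Lp.toTemperedDistribution_apply] at e1
  have e2 : ∫ x, (𝓕 g : ℝ → ℂ) x • Φ x = ∫ x, g x • (𝓕 (Φ : ℝ → ℂ) : ℝ → ℂ) x := by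
    have := VectorFourier.integral_fourierIntegral_smul_eq_flip (L := innerₗ ℝ)
      Real.continuous_fourierChar continuous_inner h1 (Φ.integrable (μ := volume))
    simpa using! this
  calc _ = ∫ x, Φ x • (𝓕 (h2.toLp g) : Lp ℂ 2 (volume : Measure ℝ)) x := by
        simp [hΦx]
    _ = ∫ x, (𝓕 Φ) x • (h2.toLp g) x := e1.symm
    _ = ∫ x, g x • (𝓕 (Φ : ℝ → ℂ) : ℝ → ℂ) x := by
        apply integral_congr_ae
        filter_upwards [h2.coeFn_toLp] with x hx
        rw [hx, SchwartzMap.fourier_coe, smul_eq_mul, smul_eq_mul, mul_comm]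
    _ = _ := by
        rw [← e2]
        simp [hΦx, mul_comm]

lemma aux_L2norm (u : Lp ℂ 2 (volume : Measure ℝ)) : ∫ x, ‖u x‖ ^ 2 = ‖u‖ ^ 2 := by
  have := L2.inner_def (𝕜 := ℂ) u u
  rw [inner_self_eq_norm_sq_to_K] at this
  simp only [inner_self_eq_norm_sq_to_K] at this
  norm_cast at this
  exact this.symm

lemma aux_plancherel (g : ℝ → ℂ) (h1 : Integrable g volume) (h2 : MemLp g 2 volume) :
    ∫ x, ‖(𝓕 g : ℝ → ℂ) x‖ ^ 2 = ∫ x, ‖g x‖ ^ 2 := by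
  calc _ = ∫ x, ‖(𝓕 (h2.toLp g) : Lp ℂ 2 (volume : Measure ℝ)) x‖ ^ 2 := by
        apply integral_congr_ae
        filter_upwards [aux_fourier_ae g h1 h2] with x hx
        rw [hx]
    _ = ∫ x, ‖(h2.toLp g) x‖ ^ 2 := by
        rw [aux_L2norm, aux_L2norm, Lp.norm_fourier_eq]
    _ = _ := by
        apply integral_congr_ae
        filter_upwards [h2.coeFn_toLp] with x hx
        rw [hx]

lemma aux_const (b : ℝ) (hb : 0 < b) : ‖qpConst b‖ ^ 2 = b / (2 * Real.pi) := by
  have h : -((Real.pi / 4 : ℝ) : ℂ) * Complex.I = ((-(Real.pi / 4) : ℝ) : ℂ) * Complex.I := by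
    push_cast; ring
  rw [qpConst, h, norm_mul, Complex.norm_exp_ofReal_mul_I, mul_one, Complex.norm_real,
    Real.norm_eq_abs, sq_abs, Real.sq_sqrt (by positivity)]

lemma aux_W (a b c d e : ℝ) (hb : 0 < b) (f ψ : ℝ → ℂ) (α ξ β : ℝ) :
    ‖QPWPT a b c d e ψ f ξ β α‖ ^ 2 = (b / (2 * Real.pi)) *
      ‖(𝓕 (fun t : ℝ => Complex.exp (((2 * a * t ^ 2 + 2 * d * t : ℝ) : ℂ) * Complex.I) *
        (f t * (starRingEnd ℂ) (dil ψ α (t - β)))) : ℝ → ℂ) (-(b / (2 * Real.pi)) * ξ)‖ ^ 2 := by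
  rw [QPWPT, norm_mul, mul_pow, aux_const b hb]
  congr 2
  rw [Real.fourier_eq']
  have hpi := Real.pi_ne_zero
  have : ∀ t : ℝ, Complex.exp (Complex.I * ((2 * a * t ^ 2 + b * t * ξ + c * ξ ^ 2 + 2 * d * t
      + e * ξ - a * β ^ 2 - d * β : ℝ) : ℂ)) * f t * (starRingEnd ℂ) (dil ψ α (t - β))
      = Complex.exp (((c * ξ ^ 2 + e * ξ - a * β ^ 2 - d * β : ℝ) : ℂ) * Complex.I) *
      (Complex.exp (((-2 * Real.pi * inner ℝ t (-(b / (2 * Real.pi)) * ξ) : ℝ) : ℂ) * Complex.I) •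
      (Complex.exp (((2 * a * t ^ 2 + 2 * d * t : ℝ) : ℂ) * Complex.I) *
        (f t * (starRingEnd ℂ) (dil ψ α (t - β))))) := by
    intro t
    have hi : -2 * Real.pi * inner ℝ t (-(b / (2 * Real.pi)) * ξ) = b * t * ξ := by
      simp only [RCLike.inner_apply, conj_trivial]
      field_simp
    rw [hi, smul_eq_mul, ← mul_assoc, ← mul_assoc, ← mul_assoc, ← Complex.exp_add,
      ← Complex.exp_add]
    congr 3
    push_cast
    ring
  simp_rw [this]
  rw [integral_const_mul, norm_mul, Complex.norm_exp_ofReal_mul_I, one_mul]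

lemma aux_dil_memLp (ψ : ℝ → ℂ) (hψ2 : MemLp ψ 2 volume) (α : ℝ) (hα : 0 < α) (β : ℝ) :
    MemLp (fun t => dil ψ α (t - β)) 2 volume := by
  have h0 : MemLp (fun t => ψ (t / α)) 2 volume := by
    rw [memLp_two_iff_integrable_sq_norm]
    · have := (hψ2.integrable_norm_pow (by norm_num)).comp_div hα.ne'
      simpa using this
    · exact hψ2.1.comp_quasiMeasurePreserving (by
        simp_rw [div_eq_inv_mul]
        refine ⟨by fun_prop, ?_⟩
        rw [Real.map_volume_mul_left (inv_ne_zero hα.ne')]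
        exact Measure.smul_absolutelyContinuous)
  have h1 : MemLp (dil ψ α) 2 volume := h0.const_mul _
  exact h1.comp_measurePreserving (measurePreserving_sub_right volume β)

lemma aux_dil_int (ψ : ℝ → ℂ) (α : ℝ) (hα : 0 < α) :
    ∫ t, ‖dil ψ α (-t)‖ ^ 2 = ∫ t, ‖ψ t‖ ^ 2 := by
  rw [integral_neg_eq_self (fun t => ‖dil ψ α t‖ ^ 2)]
  have : ∀ t, ‖dil ψ α t‖ ^ 2 = α⁻¹ * ‖ψ (t / α)‖ ^ 2 := by
    intro t
    rw [dil, norm_mul, mul_pow, Complex.norm_real, Real.norm_eq_abs, sq_abs, ← Real.rpow_natCast,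
      ← Real.rpow_mul hα.le]
    norm_num
    left
    exact Real.rpow_neg_one α
  simp_rw [this]
  rw [integral_const_mul, Measure.integral_comp_div (fun t => ‖ψ t‖ ^ 2), abs_of_pos hα,
    smul_eq_mul, inv_mul_cancel_left₀ hα.ne']


theorem qpwpt_energy_conservation (a b c d e : ℝ) (hb : 0 < b) (f ψ : ℝ → ℂ)
    (hf1 : Integrable f volume) (hf2 : MemLp f 2 volume)
    (hψ1 : Integrable ψ volume) (hψ2 : MemLp ψ 2 volume)
    (α : ℝ) (hα : 0 < α) :
    ∫ β : ℝ, ∫ ξ : ℝ, ‖QPWPT a b c d e ψ f ξ β α‖ ^ 2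
      = (∫ t : ℝ, ‖ψ t‖ ^ 2) * ∫ t : ℝ, ‖f t‖ ^ 2 := by
  have hF : Integrable (fun t => ‖f t‖ ^ 2) volume := hf2.integrable_norm_pow (by norm_num)
  have hG : Integrable (fun t => ‖dil ψ α (-t)‖ ^ 2) volume := by
    have := (aux_dil_memLp ψ hψ2 α hα 0).integrable_norm_pow (by norm_num)
    simpa using this.comp_neg
  have hconv := hF.ae_convolution_exists (ContinuousLinearMap.mul ℝ ℝ) hG
  have hint := integral_convolution (ContinuousLinearMap.mul ℝ ℝ) hF hG
  rw [aux_dil_int ψ α hα, ContinuousLinearMap.mul_apply', mul_comm] at hint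
  rw [← hint]
  apply integral_congr_ae
  filter_upwards [hconv] with β hβ
  have hd := aux_dil_memLp ψ hψ2 α hα β
  have hds : MemLp (fun t => (starRingEnd ℂ) (dil ψ α (t - β))) 2 volume := hd.star
  have hE : Continuous (fun t : ℝ =>
    Complex.exp (((2 * a * t ^ 2 + 2 * d * t : ℝ) : ℂ) * Complex.I)) := by fun_prop
  have hI : Integrable (fun t : ℝ =>
      Complex.exp (((2 * a * t ^ 2 + 2 * d * t : ℝ) : ℂ) * Complex.I) *
        (f t * (starRingEnd ℂ) (dil ψ α (t - β)))) volume := by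
    have h0 : Integrable (fun t => f t * (starRingEnd ℂ) (dil ψ α (t - β))) volume :=
      hf2.integrable_mul hds
    refine h0.mono (hE.aestronglyMeasurable.mul h0.1) (Filter.Eventually.of_forall fun t => ?_)
    rw [norm_mul, Complex.norm_exp_ofReal_mul_I, one_mul]
  have hsq : ∀ t : ℝ, ‖Complex.exp (((2 * a * t ^ 2 + 2 * d * t : ℝ) : ℂ) * Complex.I) *
        (f t * (starRingEnd ℂ) (dil ψ α (t - β)))‖ ^ 2
        = ‖f t‖ ^ 2 * ‖dil ψ α (-(β - t))‖ ^ 2 := by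
    intro t
    rw [norm_mul, Complex.norm_exp_ofReal_mul_I, one_mul, norm_mul, RCLike.norm_conj, mul_pow,
      neg_sub]
  have hI2 : MemLp (fun t : ℝ =>
      Complex.exp (((2 * a * t ^ 2 + 2 * d * t : ℝ) : ℂ) * Complex.I) *
        (f t * (starRingEnd ℂ) (dil ψ α (t - β)))) 2 volume := by
    rw [memLp_two_iff_integrable_sq_norm hI.1]
    simp_rw [hsq]
    exact hβ
  have hc : 0 < b / (2 * Real.pi) := by positivity
  simp_rw [aux_W a b c d e hb]
  rw [integral_const_mul, Measure.integral_comp_mul_left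
    (fun x => ‖(𝓕 (fun t : ℝ => Complex.exp (((2 * a * t ^ 2 + 2 * d * t : ℝ) : ℂ) * Complex.I) *
        (f t * (starRingEnd ℂ) (dil ψ α (t - β)))) : ℝ → ℂ) x‖ ^ 2),
    aux_plancherel _ hI hI2, smul_eq_mul, abs_inv, abs_neg, abs_of_pos hc,
    mul_inv_cancel_left₀ hc.ne']
  simp_rw [hsq]
  rfl
end
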